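/- arXiv:2601.22855 — 2 statements merged into one kernel-verified Lean document; each statement's English description precedes it below -/
import Mathlib

section
/- Fix α ∈ (0,1) and reals ℓ1, ℓ2, ℓ3 ≥ 1 with ℓ1 ≤ ℓ2. Define the vector field F = (F1,F3) on ℝ² by F1(w1,w3) = w1·(1−w1)·(ℓ3·(α−w1) + (ℓ2−ℓ1)·w3)/D(w1,w3) and F3(w1,w3) = w3·(ℓ2·(1−α)·w1 + ℓ1·α·(1−w1) − ℓ3·w1·(1−w1) − w3·(ℓ1 + w1·(ℓ2−ℓ1)))/D(w1,w3), where D(w1,w3) = w3·(ℓ1 + w1·(ℓ2−ℓ1)) + ℓ3·w1·(1−w1) (with the convention that F1 and F3 are 0 at points where D vanishes). Let y : [0,∞) → [0,1]² be differentiable with y′(t) = F(y(t)) for all t ≥ 0. Then lim_{t→∞} y(t) exists. -/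
open Filter

/-!
The paper excludes periodic orbits with the Bendixson–Dulac theorem; here a Lyapunov function does
the work. Write `m = ℓ₂ - ℓ₁` and `v = ℓ₃ (α - w₁) + m w₃`, so that `v` has the sign of `ẇ₁`.

The common denominator vanishes in the square only at the corners `(0, 0)` and `(1, 0)`. Both repel:
`w₃ + w₁ (1 - w₁)` increases at small positive levels. A solution therefore either rests at a corner
or stays away from both.

Along a solution, `v̇ = w₃ κ(w₁) / D - v` with `κ` affine. If `w₃ κ(w₁)` has a constant sign (for
instance when `|m| ≥ ℓ₃`), then `v` eventually has a constant sign too and `w₁` is eventually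
monotone. If `|m| < ℓ₃`, there is an equilibrium `(p, q)` that is interior, or on the side `w₃ = 0`
and attracting in the direction of `w₃`. A Lotka–Volterra type Lyapunov function based at `(p, q)`
decreases at a rate that dominates `(w₁ - p)² / D`; since `|ẇ₁|` is `O(1 / D)`, the cube
`(w₁ - p)³` has bounded variation, so `w₁` converges. Once `w₁` converges, `w₃` follows a logistic
equation with convergent coefficients.
-/

namespace TwoNestAnts

open Set Topology

section Convergence

theorem exists_tendsto_of_dense_levels {ι α : Type*} [ConditionallyCompleteLinearOrder α]
    [TopologicalSpace α] [OrderTopology α] [DenselyOrdered α] {l : Filter ι} {f : ι → α} {a b : α}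
    {s : Set α} (hs : Dense s) (hf : ∀ᶠ t in l, f t ∈ Icc a b)
    (h : ∀ c ∈ s, (∀ᶠ t in l, f t ≤ c) ∨ ∀ᶠ t in l, c ≤ f t) :
    ∃ p, Tendsto f l (𝓝 p) := by
  refine tendsto_of_no_upcrossings hs ?_ ⟨b, hf.mono fun _ ht => ht.2⟩ ⟨a, hf.mono fun _ ht => ht.1⟩
  rintro c hc d - hcd ⟨hlow, hhigh⟩
  rcases h c hc with hle | hge
  · exact hhigh (hle.mono fun t ht => (ht.trans hcd.le).not_gt)
  · exact hlow (hge.mono fun t ht => ht.not_gt)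

theorem exists_tendsto_of_tendsto_strictMono_comp {ι : Type*} {l : Filter ι} {f : ι → ℝ}
    {φ : ℝ → ℝ} {a b c : ℝ} (hφ : StrictMono φ) (hf : ∀ᶠ t in l, f t ∈ Icc a b)
    (h : Tendsto (fun t => φ (f t)) l (𝓝 c)) : ∃ p, Tendsto f l (𝓝 p) := by
  have hfiber : (φ ⁻¹' {c}).Subsingleton := subsingleton_singleton.preimage hφ.injective
  refine exists_tendsto_of_dense_levels (hfiber.countable.dense_compl ℝ) hf fun u hu => ?_
  rcases lt_or_gt_of_ne hu with hu | hu
  · exact .inr ((h.eventually_const_lt hu).mono fun t ht => (hφ.lt_iff_lt.1 ht).le)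
  · exact .inl ((h.eventually_lt_const hu).mono fun t ht => (hφ.lt_iff_lt.1 ht).le)

theorem exists_tendsto_of_monotoneOn_Ici {ι α : Type*} [LinearOrder ι]
    [ConditionallyCompleteLinearOrder α] [TopologicalSpace α] [OrderTopology α] {f : ι → α} {T : ι}
    {B : α} (hf : MonotoneOn f (Ici T)) (hB : ∀ t ∈ Ici T, f t ≤ B) :
    ∃ p, Tendsto f atTop (𝓝 p) := by
  have hmono : Monotone fun t => f (max T t) := fun s t hst =>
    hf (le_max_left T s) (le_max_left T t) (max_le_max_left T hst)
  have hbdd : BddAbove (range fun t => f (max T t)) :=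
    ⟨B, forall_mem_range.2 fun t => hB _ (le_max_left T t)⟩
  refine ⟨_, (tendsto_atTop_ciSup hmono hbdd).congr' ?_⟩
  filter_upwards [eventually_ge_atTop T] with t ht
  rw [max_eq_right ht]

theorem exists_tendsto_of_const_sub {ι G : Type*} [AddCommGroup G] [TopologicalSpace G]
    [IsTopologicalAddGroup G] {l : Filter ι} {f : ι → G} (c : G)
    (h : ∃ p, Tendsto (fun t => c - f t) l (𝓝 p)) : ∃ p, Tendsto f l (𝓝 p) :=
  let ⟨p, hp⟩ := h
  ⟨c - p, by simpa only [sub_sub_cancel] using hp.const_sub c⟩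

end Convergence

section OneSidedDerivatives

variable {f f' : ℝ → ℝ} {T : ℝ}

theorem monotoneOn_Ici_of_deriv_nonneg (hf : ∀ t ∈ Ici T, HasDerivWithinAt f (f' t) (Ici T) t)
    (h : ∀ t ∈ Ici T, 0 ≤ f' t) : MonotoneOn f (Ici T) :=
  monotoneOn_of_hasDerivWithinAt_nonneg (convex_Ici T) (fun t ht => (hf t ht).continuousWithinAt)
    (fun t ht => (hf t (interior_subset ht)).mono interior_subset)
    fun t ht => h t (interior_subset ht)

theorem exists_tendsto_of_deriv_nonneg {B : ℝ}
    (hf : ∀ t ∈ Ici T, HasDerivWithinAt f (f' t) (Ici T) t) (h : ∀ t ∈ Ici T, 0 ≤ f' t)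
    (hB : ∀ t ∈ Ici T, f t ≤ B) : ∃ p, Tendsto f atTop (𝓝 p) :=
  exists_tendsto_of_monotoneOn_Ici (monotoneOn_Ici_of_deriv_nonneg hf h) hB

theorem exists_tendsto_of_deriv_nonpos {A : ℝ}
    (hf : ∀ t ∈ Ici T, HasDerivWithinAt f (f' t) (Ici T) t) (h : ∀ t ∈ Ici T, f' t ≤ 0)
    (hA : ∀ t ∈ Ici T, A ≤ f t) : ∃ p, Tendsto f atTop (𝓝 p) := by
  obtain ⟨p, hp⟩ := exists_tendsto_of_deriv_nonneg (fun t ht => (hf t ht).fun_neg)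
    (fun t ht => neg_nonneg.2 (h t ht)) fun t ht => neg_le_neg (hA t ht)
  exact ⟨-p, by simpa only [neg_neg] using hp.neg⟩

theorem le_of_deriv_pos_at_level {c : ℝ} (hf : ∀ t ∈ Ici T, HasDerivWithinAt f (f' t) (Ici T) t)
    (h : ∀ t ∈ Ici T, f t = c → 0 < f' t) (hc : c ≤ f T) : ∀ t ∈ Ici T, c ≤ f t := fun t ht =>
  image_le_of_deriv_right_lt_deriv_boundary' (f := fun _ => c) (f' := fun _ => 0) (b := t)
    continuousOn_const (fun _ _ => hasDerivWithinAt_const _ _ _) hc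
    (fun u hu => (hf u hu.1).continuousWithinAt.mono Icc_subset_Ici_self)
    (fun u hu => (hf u hu.1).mono (Ici_subset_Ici.2 hu.1))
    (fun u hu hcu => h u hu.1 hcu.symm) ⟨ht, le_rfl⟩

theorem eventually_le_or_ge_of_deriv_pos_at_level {c : ℝ}
    (hf : ∀ t ∈ Ici T, HasDerivWithinAt f (f' t) (Ici T) t)
    (h : ∀ᶠ t in atTop, f t = c → 0 < f' t) :
    (∀ᶠ t in atTop, f t ≤ c) ∨ ∀ᶠ t in atTop, c ≤ f t := by
  refine or_iff_not_imp_left.2 fun hle => ?_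
  obtain ⟨S, hS⟩ := eventually_atTop.1 (h.and (eventually_ge_atTop T))
  obtain ⟨s, hs, hcs⟩ := ((not_eventually.1 hle).and_eventually (eventually_ge_atTop S)).exists.imp
    fun _ => And.symm
  have hTs : Ici s ⊆ Ici T := fun t ht => (hS t (le_trans hs ht)).2
  exact eventually_atTop.2 ⟨s, le_of_deriv_pos_at_level
    (fun t ht => (hf t (hTs ht)).mono hTs) (fun t ht => (hS t (le_trans hs ht)).1)
    (not_le.1 hcs).le⟩

theorem exists_tendsto_of_deriv_sign_at_levels {a b : ℝ} {s : Set ℝ} (hs : Dense s)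
    (hf : ∀ t ∈ Ici T, HasDerivWithinAt f (f' t) (Ici T) t) (hab : MapsTo f (Ici T) (Icc a b))
    (h : ∀ c ∈ s, (∀ᶠ t in atTop, f t = c → 0 < f' t) ∨ ∀ᶠ t in atTop, f t = c → f' t < 0) :
    ∃ p, Tendsto f atTop (𝓝 p) := by
  refine exists_tendsto_of_dense_levels hs ((eventually_ge_atTop T).mono hab) fun c hc => ?_
  rcases h c hc with hpos | hneg
  · exact eventually_le_or_ge_of_deriv_pos_at_level hf hpos
  · have := eventually_le_or_ge_of_deriv_pos_at_level (c := -c) (fun t ht => (hf t ht).fun_neg)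
      (hneg.mono fun t ht htc => neg_pos.2 (ht (neg_inj.1 htc)))
    simpa only [neg_le_neg_iff, or_comm] using this

theorem monotoneOn_exp_mul_of_neg_mul_le_deriv {M : ℝ}
    (hf : ∀ t ∈ Ici T, HasDerivWithinAt f (f' t) (Ici T) t) (h : ∀ t ∈ Ici T, -M * f t ≤ f' t) :
    MonotoneOn (fun t => Real.exp (M * t) * f t) (Ici T) := by
  refine monotoneOn_Ici_of_deriv_nonneg (f' := fun t => Real.exp (M * t) * (f' t + M * f t)) ?_ ?_
  · intro t ht
    have hexp : HasDerivAt (fun t => Real.exp (M * t)) (Real.exp (M * t) * (M * 1)) t :=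
      ((hasDerivAt_id t).const_mul M).exp
    exact (hexp.hasDerivWithinAt.mul (hf t ht)).congr_deriv (by ring)
  · intro t ht
    have := h t ht
    exact mul_nonneg (Real.exp_nonneg _) (by linarith)

theorem nonneg_of_neg_mul_le_deriv {M : ℝ} (hf : ∀ t ∈ Ici T, HasDerivWithinAt f (f' t) (Ici T) t)
    (h : ∀ t ∈ Ici T, -M * f t ≤ f' t) (hT : 0 ≤ f T) : ∀ t ∈ Ici T, 0 ≤ f t := fun _ ht =>
  nonneg_of_mul_nonneg_right ((mul_nonneg (Real.exp_nonneg _) hT).trans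
    (monotoneOn_exp_mul_of_neg_mul_le_deriv hf h self_mem_Ici ht ht)) (Real.exp_pos _)

theorem eq_zero_or_pos_of_neg_mul_le_deriv {M : ℝ}
    (hf : ∀ t ∈ Ici T, HasDerivWithinAt f (f' t) (Ici T) t) (h : ∀ t ∈ Ici T, -M * f t ≤ f' t)
    (h0 : ∀ t ∈ Ici T, 0 ≤ f t) :
    (∀ t ∈ Ici T, f t = 0) ∨ ∃ s ∈ Ici T, ∀ t ∈ Ici s, 0 < f t := by
  refine or_iff_not_imp_left.2 fun hne => ?_
  push Not at hne
  obtain ⟨s, hs, hfs⟩ := hne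
  have hpos : 0 < f s := (h0 s hs).lt_of_ne' hfs
  refine ⟨s, hs, fun t ht => ?_⟩
  exact pos_of_mul_pos_right ((mul_pos (Real.exp_pos _) hpos).trans_le
    (monotoneOn_exp_mul_of_neg_mul_le_deriv hf h hs (Ici_subset_Ici.2 hs ht) ht))
    (Real.exp_nonneg _)

/- `(f - p) ^ 3 + (3 K / κ) W` is nonincreasing: the dissipation of `W` absorbs the growth of the
cube. -/
theorem exists_tendsto_of_dissipation {W W' r : ℝ → ℝ} {a b w p K κ : ℝ} (hK : 0 ≤ K) (hκ : 0 < κ)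
    (hf : ∀ t ∈ Ici T, HasDerivWithinAt f (f' t) (Ici T) t)
    (hW : ∀ t ∈ Ici T, HasDerivWithinAt W (W' t) (Ici T) t)
    (hfab : MapsTo f (Ici T) (Icc a b)) (hWw : ∀ t ∈ Ici T, w ≤ W t)
    (hr : ∀ t ∈ Ici T, 0 ≤ r t) (hf' : ∀ t ∈ Ici T, f' t ≤ K * r t)
    (hW' : ∀ t ∈ Ici T, W' t ≤ -(κ * (f t - p) ^ 2 * r t)) :
    ∃ p, Tendsto f atTop (𝓝 p) := by
  have hcube : StrictMono fun u : ℝ => (u - p) ^ 3 :=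
    (Odd.strictMono_pow (by decide)).comp fun u v huv => sub_lt_sub_right huv p
  set C := 3 * K / κ
  have hC0 : 0 ≤ C := by positivity
  have hCκ : C * κ = 3 * K := div_mul_cancel₀ _ hκ.ne'
  obtain ⟨wLim, hwLim⟩ := exists_tendsto_of_deriv_nonpos hW
    (fun t ht => (hW' t ht).trans (neg_nonpos.2 (by have := hr t ht; positivity))) hWw
  have hderiv_nonpos : ∀ t ∈ Ici T, 3 * (f t - p) ^ 2 * f' t + C * W' t ≤ 0 := fun t ht => calc
    3 * (f t - p) ^ 2 * f' t + C * W' t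
      ≤ 3 * (f t - p) ^ 2 * (K * r t) + C * -(κ * (f t - p) ^ 2 * r t) := by
        gcongr
        exacts [hf' t ht, hW' t ht]
    _ = (3 * K - C * κ) * ((f t - p) ^ 2 * r t) := by ring
    _ = 0 := by rw [hCκ, sub_self, zero_mul]
  obtain ⟨vLim, hvLim⟩ := exists_tendsto_of_deriv_nonpos (f := fun t => (f t - p) ^ 3 + C * W t)
    (A := (a - p) ^ 3 + C * w)
    (fun t ht => ((((hf t ht).sub_const p).fun_pow 3).add ((hW t ht).const_mul C)).congr_deriv
      (by norm_num : _ = 3 * (f t - p) ^ 2 * f' t + C * W' t))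
    hderiv_nonpos
    fun t ht => add_le_add (hcube.monotone (hfab ht).1) (mul_le_mul_of_nonneg_left (hWw t ht) hC0)
  refine exists_tendsto_of_tendsto_strictMono_comp hcube ((eventually_ge_atTop T).mono hfab)
    (c := vLim - C * wLim) ?_
  simpa only [add_sub_cancel_right] using hvLim.sub (hwLim.const_mul C)

end OneSidedDerivatives

/-- The proportion `α` of one nest and the side lengths `ℓ₁, ℓ₂, ℓ₃` of the triangle in the two-nest
ants process. -/
structure Params where
  α : ℝ
  ℓ₁ : ℝ
  ℓ₂ : ℝ
  ℓ₃ : ℝ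
  α_pos : 0 < α
  α_lt_one : α < 1
  ℓ₁_pos : 0 < ℓ₁
  ℓ₂_pos : 0 < ℓ₂
  ℓ₃_pos : 0 < ℓ₃

namespace Params

variable (P : Params) (p q x z : ℝ)

/-- The coefficient of `w₃` in the common denominator of the vector field. -/
def side : ℝ := P.ℓ₁ * (1 - x) + P.ℓ₂ * x

/-- The common denominator `D` of the two components of the vector field. -/
def denom : ℝ := z * P.side x + P.ℓ₃ * (x * (1 - x))

/-- The factor `v` of the first component of the vector field that determines its sign. -/
def drift : ℝ := P.ℓ₃ * (P.α - x) + (P.ℓ₂ - P.ℓ₁) * z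

/-- The growth rate of `w₃`, multiplied by the common denominator. -/
def growth : ℝ := P.ℓ₂ * (1 - P.α) * x + P.ℓ₁ * P.α * (1 - x) - P.denom x z

/-- The vector field `F = (F₁, F₃)`. Where the denominator vanishes, division by zero makes both
components `0`, in accordance with the convention for `F`. -/
noncomputable def field (w : ℝ × ℝ) : ℝ × ℝ :=
  (w.1 * (1 - w.1) * P.drift w.1 w.2 / P.denom w.1 w.2, w.2 * P.growth w.1 w.2 / P.denom w.1 w.2)

/-- The affine function `κ` of `w₁` in the equation `v̇ = w₃ κ(w₁) / D - v` along solutions. -/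
def forcing : ℝ :=
  P.ℓ₁ * P.α * (P.ℓ₃ + (P.ℓ₂ - P.ℓ₁)) * (1 - x) + P.ℓ₂ * (1 - P.α) * (P.ℓ₂ - P.ℓ₁ - P.ℓ₃) * x

/-- Minus the slope of `forcing`. -/
def damping : ℝ :=
  P.ℓ₁ * P.α * (P.ℓ₃ + (P.ℓ₂ - P.ℓ₁)) + P.ℓ₂ * (1 - P.α) * (P.ℓ₃ - (P.ℓ₂ - P.ℓ₁))

/-- The parameters with the two nests exchanged, which corresponds to `w₁ ↦ 1 - w₁`. -/
def reflect : Params where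
  α := 1 - P.α
  ℓ₁ := P.ℓ₂
  ℓ₂ := P.ℓ₁
  ℓ₃ := P.ℓ₃
  α_pos := sub_pos.2 P.α_lt_one
  α_lt_one := sub_lt_self 1 P.α_pos
  ℓ₁_pos := P.ℓ₂_pos
  ℓ₂_pos := P.ℓ₁_pos
  ℓ₃_pos := P.ℓ₃_pos

theorem one_sub_α_pos : 0 < 1 - P.α := sub_pos.2 P.α_lt_one

theorem reflect_denom : P.reflect.denom (1 - x) z = P.denom x z := by
  simp only [denom, side, reflect]; ring

theorem reflect_drift : P.reflect.drift (1 - x) z = -P.drift x z := by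
  simp only [drift, reflect]; ring

theorem reflect_growth : P.reflect.growth (1 - x) z = P.growth x z := by
  rw [growth, reflect_denom, growth]
  simp only [reflect]; ring

theorem field_eq_ite (w : ℝ × ℝ) :
    P.field w = if w.2 * (P.ℓ₁ + w.1 * (P.ℓ₂ - P.ℓ₁)) + P.ℓ₃ * w.1 * (1 - w.1) = 0 then 0
      else
        (w.1 * (1 - w.1) * (P.ℓ₃ * (P.α - w.1) + (P.ℓ₂ - P.ℓ₁) * w.2)
            / (w.2 * (P.ℓ₁ + w.1 * (P.ℓ₂ - P.ℓ₁)) + P.ℓ₃ * w.1 * (1 - w.1)),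
          w.2 * (P.ℓ₂ * (1 - P.α) * w.1 + P.ℓ₁ * P.α * (1 - w.1) - P.ℓ₃ * w.1 * (1 - w.1)
                  - w.2 * (P.ℓ₁ + w.1 * (P.ℓ₂ - P.ℓ₁)))
            / (w.2 * (P.ℓ₁ + w.1 * (P.ℓ₂ - P.ℓ₁)) + P.ℓ₃ * w.1 * (1 - w.1))) := by
  have hdenom : w.2 * (P.ℓ₁ + w.1 * (P.ℓ₂ - P.ℓ₁)) + P.ℓ₃ * w.1 * (1 - w.1)
      = P.denom w.1 w.2 := by
    simp only [denom, side]; ring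
  have hgrowth : P.ℓ₂ * (1 - P.α) * w.1 + P.ℓ₁ * P.α * (1 - w.1) - P.ℓ₃ * w.1 * (1 - w.1)
      - w.2 * (P.ℓ₁ + w.1 * (P.ℓ₂ - P.ℓ₁)) = P.growth w.1 w.2 := by
    rw [growth, ← hdenom]; ring
  rw [hdenom, hgrowth]
  split_ifs with h0
  · rw [field, h0, div_zero, div_zero, Prod.mk_zero_zero]
  · rfl

theorem forcing_eq_growth_add_drift :
    P.forcing x = (P.ℓ₂ - P.ℓ₁) * P.growth x z + P.side x * P.drift x z := by
  simp only [forcing, growth, drift, denom, side]; ring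

theorem forcing_eq_sub_damping : P.forcing x = P.forcing p - P.damping * (x - p) := by
  simp only [forcing, damping]; ring

theorem growth_eq_sub_side_mul : P.growth x z = P.growth x q - P.side x * (z - q) := by
  simp only [growth, denom]; ring

variable {P p q x z}

theorem min_le_side (hx : x ∈ Icc 0 1) : min P.ℓ₁ P.ℓ₂ ≤ P.side x := calc
  min P.ℓ₁ P.ℓ₂ = min P.ℓ₁ P.ℓ₂ * (1 - x) + min P.ℓ₁ P.ℓ₂ * x := by ring
  _ ≤ P.side x := add_le_add
    (mul_le_mul_of_nonneg_right (min_le_left _ _) (sub_nonneg.2 hx.2))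
    (mul_le_mul_of_nonneg_right (min_le_right _ _) hx.1)

theorem side_pos (hx : x ∈ Icc 0 1) : 0 < P.side x :=
  (lt_min P.ℓ₁_pos P.ℓ₂_pos).trans_le (min_le_side hx)

theorem neg_denom_le_growth (hx : x ∈ Icc 0 1) : -P.denom x z ≤ P.growth x z := by
  have := P.α_pos
  have := P.one_sub_α_pos
  have := P.ℓ₁_pos
  have := P.ℓ₂_pos
  have := hx.1
  have : 0 ≤ 1 - x := sub_nonneg.2 hx.2
  have : 0 ≤ P.ℓ₂ * (1 - P.α) * x + P.ℓ₁ * P.α * (1 - x) := by positivity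
  rw [growth]
  linarith

theorem abs_drift_le (hx : x ∈ Icc 0 1) (hz : z ∈ Icc 0 1) :
    |P.drift x z| ≤ P.ℓ₃ + |P.ℓ₂ - P.ℓ₁| := by
  have hαx : |P.α - x| ≤ 1 := abs_sub_le_iff.2
    ⟨by linarith [P.α_lt_one, hx.1], by linarith [P.α_pos, hx.2]⟩
  have hz1 : |z| ≤ 1 := abs_le.2 ⟨by linarith [hz.1], hz.2⟩
  calc |P.drift x z| ≤ P.ℓ₃ * |P.α - x| + |P.ℓ₂ - P.ℓ₁| * |z| := by
        simpa only [drift, abs_mul, abs_of_pos P.ℓ₃_pos] using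
          abs_add_le (P.ℓ₃ * (P.α - x)) ((P.ℓ₂ - P.ℓ₁) * z)
    _ ≤ P.ℓ₃ * 1 + |P.ℓ₂ - P.ℓ₁| * 1 := by
        have := P.ℓ₃_pos
        gcongr
    _ = P.ℓ₃ + |P.ℓ₂ - P.ℓ₁| := by ring

variable (P) in
theorem exists_denom_lower_bound : ∃ κ > 0, ∀ x ∈ Icc (0 : ℝ) 1, ∀ z ∈ Icc (0 : ℝ) 1,
    κ * (z + x * (1 - x)) ≤ P.denom x z := by
  refine ⟨min (min P.ℓ₁ P.ℓ₂) P.ℓ₃, lt_min (lt_min P.ℓ₁_pos P.ℓ₂_pos) P.ℓ₃_pos,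
    fun x hx z hz => ?_⟩
  rw [mul_add, denom, mul_comm z]
  exact add_le_add
    (mul_le_mul_of_nonneg_right ((min_le_left _ _).trans (min_le_side hx)) hz.1)
    (mul_le_mul_of_nonneg_right (min_le_right _ _) (mul_nonneg hx.1 (sub_nonneg.2 hx.2)))

variable (P) in
theorem exists_growth_drift_pos_near_origin :
    ∃ ε > 0, ∀ x ∈ Ico 0 ε, ∀ z ∈ Ico 0 ε, 0 < P.growth x z ∧ 0 < P.drift x z := by
  have hgrowth : ContinuousAt (fun w : ℝ × ℝ => P.growth w.1 w.2) (0, 0) := by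
    unfold growth denom side; fun_prop
  have hdrift : ContinuousAt (fun w : ℝ × ℝ => P.drift w.1 w.2) (0, 0) := by
    unfold drift; fun_prop
  have hgrowth_origin : 0 < P.growth 0 0 := by
    simpa [growth, denom] using mul_pos P.ℓ₁_pos P.α_pos
  have hdrift_origin : 0 < P.drift 0 0 := by
    simpa [drift] using mul_pos P.ℓ₃_pos P.α_pos
  obtain ⟨ε, hε, hball⟩ := Metric.eventually_nhds_iff.1
    ((hgrowth.eventually_const_lt hgrowth_origin).and (hdrift.eventually_const_lt hdrift_origin))
  refine ⟨ε, hε, fun x hx z hz => @hball (x, z) ?_⟩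
  simpa [Prod.dist_eq, abs_of_nonneg hx.1, abs_of_nonneg hz.1] using ⟨hx.2, hz.2⟩

variable (P) in
theorem exists_growth_drift_pos_near_corners :
    ∃ δ > 0, ∀ x ∈ Icc (0 : ℝ) 1, ∀ z ∈ Icc (0 : ℝ) 1, z + x * (1 - x) ≤ δ →
      0 < P.growth x z ∧ 0 < (1 - 2 * x) * P.drift x z := by
  obtain ⟨ε, hε, hleft⟩ := P.exists_growth_drift_pos_near_origin
  obtain ⟨ε', hε', hright⟩ := P.reflect.exists_growth_drift_pos_near_origin
  refine ⟨min (min ε ε') (1 / 2) / 3, by positivity, fun x hx z hz hδ => ?_⟩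
  have : min (min ε ε') (1 / 2) ≤ ε := (min_le_left _ _).trans (min_le_left _ _)
  have : min (min ε ε') (1 / 2) ≤ ε' := (min_le_left _ _).trans (min_le_right _ _)
  have : min (min ε ε') (1 / 2) ≤ 1 / 2 := min_le_right _ _
  have hz0 := hz.1
  have hb : 0 ≤ x * (1 - x) := mul_nonneg hx.1 (sub_nonneg.2 hx.2)
  rcases le_total x (1 / 2) with hx2 | hx2
  · have : x ≤ 2 * (x * (1 - x)) := by nlinarith [hx.1]
    obtain ⟨hg, hv⟩ := hleft x ⟨hx.1, by linarith⟩ z ⟨hz0, by linarith⟩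
    exact ⟨hg, mul_pos (by linarith) hv⟩
  · have : 1 - x ≤ 2 * (x * (1 - x)) := by nlinarith [hx.2]
    obtain ⟨hg, hv⟩ := hright (1 - x) ⟨sub_nonneg.2 hx.2, by linarith⟩ z ⟨hz0, by linarith⟩
    rw [reflect_growth] at hg
    rw [reflect_drift] at hv
    exact ⟨hg, mul_pos_of_neg_of_neg (by linarith) (neg_pos.1 hv)⟩

theorem forcing_nonneg (h : P.ℓ₃ ≤ P.ℓ₂ - P.ℓ₁) (hx : x ∈ Icc 0 1) : 0 ≤ P.forcing x := by
  have := P.α_pos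
  have := P.one_sub_α_pos
  have := P.ℓ₁_pos
  have := P.ℓ₂_pos
  have := P.ℓ₃_pos
  have := hx.1
  have : 0 ≤ 1 - x := sub_nonneg.2 hx.2
  have : 0 ≤ P.ℓ₂ - P.ℓ₁ - P.ℓ₃ := sub_nonneg.2 h
  have : 0 ≤ P.ℓ₃ + (P.ℓ₂ - P.ℓ₁) := by linarith
  rw [forcing]
  positivity

theorem damping_pos (h : |P.ℓ₂ - P.ℓ₁| < P.ℓ₃) : 0 < P.damping := by
  obtain ⟨hlow, hhigh⟩ := abs_lt.1 h
  have := P.α_pos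
  have := P.one_sub_α_pos
  have := P.ℓ₁_pos
  have := P.ℓ₂_pos
  have : 0 < P.ℓ₃ + (P.ℓ₂ - P.ℓ₁) := by linarith
  have : 0 < P.ℓ₃ - (P.ℓ₂ - P.ℓ₁) := by linarith
  rw [damping]
  positivity

end Params

/-- An equilibrium `(p, q)` of the vector field with `0 < p < 1` that satisfies the complementarity
conditions `q ≥ 0`, `growth ≤ 0` and `q * growth = 0`: either it lies off the side `w₃ = 0`, or it
is on that side and `w₃` does not grow there. -/
structure IsSaturatedEquilibrium (P : Params) (p q : ℝ) : Prop where
  fst_mem : p ∈ Ioo 0 1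
  snd_nonneg : 0 ≤ q
  drift_eq_zero : P.drift p q = 0
  growth_nonpos : P.growth p q ≤ 0
  mul_growth_eq_zero : q * P.growth p q = 0

theorem isSaturatedEquilibrium_boundary {P : Params} (h : P.ℓ₁ + P.ℓ₂ ≤ P.ℓ₃) :
    IsSaturatedEquilibrium P P.α 0 where
  fst_mem := ⟨P.α_pos, P.α_lt_one⟩
  snd_nonneg := le_rfl
  drift_eq_zero := by simp [Params.drift]
  growth_nonpos := by
    have hgrowth : P.growth P.α 0 = P.α * (1 - P.α) * (P.ℓ₁ + P.ℓ₂ - P.ℓ₃) := by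
      simp only [Params.growth, Params.denom]; ring
    rw [hgrowth]
    exact mul_nonpos_of_nonneg_of_nonpos (mul_nonneg P.α_pos.le P.one_sub_α_pos.le)
      (sub_nonpos.2 h)
  mul_growth_eq_zero := zero_mul _

theorem isSaturatedEquilibrium_interior {P : Params} (h : |P.ℓ₂ - P.ℓ₁| < P.ℓ₃)
    (hℓ : P.ℓ₃ ≤ P.ℓ₁ + P.ℓ₂) :
    IsSaturatedEquilibrium P (P.ℓ₁ * P.α * (P.ℓ₃ + (P.ℓ₂ - P.ℓ₁)) / P.damping)
      (P.ℓ₃ * (P.α * (1 - P.α)) * (P.ℓ₁ + P.ℓ₂ - P.ℓ₃) / P.damping) := by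
  have hc := P.damping_pos h
  obtain ⟨hlow, hhigh⟩ := abs_lt.1 h
  have := P.α_pos
  have := P.one_sub_α_pos
  have := P.ℓ₁_pos
  have := P.ℓ₂_pos
  have := P.ℓ₃_pos
  have : 0 < P.ℓ₃ + (P.ℓ₂ - P.ℓ₁) := by linarith
  have : 0 < P.ℓ₃ - (P.ℓ₂ - P.ℓ₁) := by linarith
  have : 0 ≤ P.ℓ₁ + P.ℓ₂ - P.ℓ₃ := sub_nonneg.2 hℓ
  have hgrowth : P.growth (P.ℓ₁ * P.α * (P.ℓ₃ + (P.ℓ₂ - P.ℓ₁)) / P.damping)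
      (P.ℓ₃ * (P.α * (1 - P.α)) * (P.ℓ₁ + P.ℓ₂ - P.ℓ₃) / P.damping) = 0 := by
    simp only [Params.growth, Params.denom, Params.side]
    field_simp
    rw [Params.damping]
    ring
  refine ⟨⟨by positivity, ?_⟩, by positivity, ?_, hgrowth.le, by rw [hgrowth, mul_zero]⟩
  · rw [div_lt_one hc, Params.damping, lt_add_iff_pos_right]
    positivity
  · rw [Params.drift]
    field_simp
    rw [Params.damping]
    ring

theorem exists_isSaturatedEquilibrium {P : Params} (h : |P.ℓ₂ - P.ℓ₁| < P.ℓ₃) :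
    ∃ p q, IsSaturatedEquilibrium P p q := by
  rcases le_total P.ℓ₃ (P.ℓ₁ + P.ℓ₂) with hℓ | hℓ
  · exact ⟨_, _, isSaturatedEquilibrium_interior h hℓ⟩
  · exact ⟨_, _, isSaturatedEquilibrium_boundary hℓ⟩

/-- `(x, z)` solves the differential equation `ẇ = F(w)` on `[T, ∞)` and stays in the square
`[0, 1]²`. -/
structure IsSolution (P : Params) (T : ℝ) (x z : ℝ → ℝ) : Prop where
  fst_mem : MapsTo x (Ici T) (Icc 0 1)
  snd_mem : MapsTo z (Ici T) (Icc 0 1)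
  hasDeriv_fst : ∀ t ∈ Ici T, HasDerivWithinAt x
    (x t * (1 - x t) * P.drift (x t) (z t) / P.denom (x t) (z t)) (Ici T) t
  hasDeriv_snd : ∀ t ∈ Ici T, HasDerivWithinAt z
    (z t * P.growth (x t) (z t) / P.denom (x t) (z t)) (Ici T) t

/-- A solution that stays away from the two corners where the denominator vanishes. -/
structure IsRegularSolution (P : Params) (T : ℝ) (x z : ℝ → ℝ) : Prop
    extends IsSolution P T x z where
  exists_le_denom : ∃ d > 0, ∀ t ∈ Ici T, d ≤ P.denom (x t) (z t)

variable {P : Params} {T S : ℝ} {x z : ℝ → ℝ}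

namespace IsSolution

theorem mono (h : IsSolution P T x z) (hS : S ∈ Ici T) : IsSolution P S x z where
  fst_mem := h.fst_mem.mono_left (Ici_subset_Ici.2 hS)
  snd_mem := h.snd_mem.mono_left (Ici_subset_Ici.2 hS)
  hasDeriv_fst t ht := (h.hasDeriv_fst t (Ici_subset_Ici.2 hS ht)).mono (Ici_subset_Ici.2 hS)
  hasDeriv_snd t ht := (h.hasDeriv_snd t (Ici_subset_Ici.2 hS ht)).mono (Ici_subset_Ici.2 hS)

theorem reflect (h : IsSolution P T x z) : IsSolution P.reflect T (fun t => 1 - x t) z where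
  fst_mem t ht := ⟨sub_nonneg.2 (h.fst_mem ht).2, sub_le_self _ (h.fst_mem ht).1⟩
  snd_mem := h.snd_mem
  hasDeriv_fst t ht := ((h.hasDeriv_fst t ht).const_sub 1).congr_deriv (by
    rw [P.reflect_drift, P.reflect_denom]; ring)
  hasDeriv_snd t ht := by
    rw [P.reflect_growth, P.reflect_denom]; exact h.hasDeriv_snd t ht

theorem mul_one_sub_nonneg (h : IsSolution P T x z) {t : ℝ} (ht : t ∈ Ici T) :
    0 ≤ x t * (1 - x t) :=
  mul_nonneg (h.fst_mem ht).1 (sub_nonneg.2 (h.fst_mem ht).2)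

theorem hasDerivWithinAt_add_mul_one_sub (h : IsSolution P T x z) {t : ℝ} (ht : t ∈ Ici T) :
    HasDerivWithinAt (fun t => z t + x t * (1 - x t))
      ((z t * P.growth (x t) (z t) +
        x t * (1 - x t) * ((1 - 2 * x t) * P.drift (x t) (z t))) / P.denom (x t) (z t))
      (Ici T) t :=
  ((h.hasDeriv_snd t ht).add
    ((h.hasDeriv_fst t ht).mul ((h.hasDeriv_fst t ht).const_sub 1))).congr_deriv (by ring)

theorem isRegularSolution_of_pos (h : IsSolution P T x z) (hT : 0 < z T + x T * (1 - x T)) :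
    IsRegularSolution P T x z := by
  obtain ⟨κ, hκ, hdenom⟩ := P.exists_denom_lower_bound
  obtain ⟨δ, hδ, hcorner⟩ := P.exists_growth_drift_pos_near_corners
  set c := min δ (z T + x T * (1 - x T))
  have hc : 0 < c := lt_min hδ hT
  have hrepel : ∀ t ∈ Ici T, c ≤ z t + x t * (1 - x t) := by
    refine le_of_deriv_pos_at_level (fun t ht => h.hasDerivWithinAt_add_mul_one_sub ht)
      (fun t ht hlevel => ?_) (min_le_right _ _)
    have hx := h.fst_mem ht
    have hz := h.snd_mem ht
    obtain ⟨hgrowth, hdrift⟩ := hcorner _ hx _ hz (hlevel.trans_le (min_le_left _ _))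
    have hD : 0 < P.denom (x t) (z t) :=
      (mul_pos hκ (hc.trans_eq hlevel.symm)).trans_le (hdenom _ hx _ hz)
    refine div_pos ?_ hD
    rcases hz.1.eq_or_lt with hz0 | hz0
    · have hb : 0 < x t * (1 - x t) := by rwa [← hlevel, ← hz0, zero_add] at hc
      exact add_pos_of_nonneg_of_pos (mul_nonneg hz.1 hgrowth.le) (mul_pos hb hdrift)
    · exact add_pos_of_pos_of_nonneg (mul_pos hz0 hgrowth)
        (mul_nonneg (h.mul_one_sub_nonneg ht) hdrift.le)
  exact ⟨h, κ * c, mul_pos hκ hc, fun t ht => (mul_le_mul_of_nonneg_left (hrepel t ht) hκ.le).trans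
    (hdenom _ (h.fst_mem ht) _ (h.snd_mem ht))⟩

theorem exists_tendsto_of_add_mul_one_sub_nonpos (h : IsSolution P T x z)
    (hcorner : ∀ t ∈ Ici T, z t + x t * (1 - x t) ≤ 0) :
    (∃ p, Tendsto x atTop (𝓝 p)) ∧ ∃ q, Tendsto z atTop (𝓝 q) := by
  have hz : ∀ t ∈ Ici T, z t = 0 := fun t ht =>
    le_antisymm (by linarith [hcorner t ht, h.mul_one_sub_nonneg ht]) (h.snd_mem ht).1
  have hx : ∀ t ∈ Ici T, x t * (1 - x t) = 0 := fun t ht =>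
    le_antisymm (by linarith [hcorner t ht, (h.snd_mem ht).1]) (h.mul_one_sub_nonneg ht)
  exact ⟨exists_tendsto_of_deriv_nonneg h.hasDeriv_fst
      (fun t ht => by rw [hx t ht, zero_mul, zero_div]) fun t ht => (h.fst_mem ht).2,
    exists_tendsto_of_deriv_nonneg h.hasDeriv_snd
      (fun t ht => by rw [hz t ht, zero_mul, zero_div]) fun t ht => (h.snd_mem ht).2⟩

end IsSolution

namespace IsRegularSolution

theorem mono (h : IsRegularSolution P T x z) (hS : S ∈ Ici T) : IsRegularSolution P S x z :=
  ⟨h.toIsSolution.mono hS, h.exists_le_denom.imp fun _ hd =>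
    ⟨hd.1, fun t ht => hd.2 t (Ici_subset_Ici.2 hS ht)⟩⟩

theorem reflect (h : IsRegularSolution P T x z) :
    IsRegularSolution P.reflect T (fun t => 1 - x t) z :=
  ⟨h.toIsSolution.reflect, by simpa only [P.reflect_denom] using h.exists_le_denom⟩

theorem denom_pos (h : IsRegularSolution P T x z) {t : ℝ} (ht : t ∈ Ici T) :
    0 < P.denom (x t) (z t) :=
  let ⟨_, hd, hD⟩ := h.exists_le_denom
  hd.trans_le (hD t ht)

theorem hasDerivWithinAt_drift (h : IsRegularSolution P T x z) {t : ℝ} (ht : t ∈ Ici T) :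
    HasDerivWithinAt (fun t => P.drift (x t) (z t))
      (z t * P.forcing (x t) / P.denom (x t) (z t) - P.drift (x t) (z t)) (Ici T) t := by
  refine ((((h.hasDeriv_fst t ht).const_sub P.α).const_mul P.ℓ₃).add
    ((h.hasDeriv_snd t ht).const_mul (P.ℓ₂ - P.ℓ₁))).congr_deriv ?_
  have hD := (h.denom_pos ht).ne'
  rw [P.forcing_eq_growth_add_drift _ (z t)]
  field_simp
  rw [Params.denom]
  ring

theorem exists_tendsto_fst_of_drift_nonneg (h : IsRegularSolution P T x z)
    (hdrift : ∀ t ∈ Ici T, 0 ≤ P.drift (x t) (z t)) : ∃ p, Tendsto x atTop (𝓝 p) :=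
  exists_tendsto_of_deriv_nonneg h.hasDeriv_fst
    (fun t ht =>
      div_nonneg (mul_nonneg (h.mul_one_sub_nonneg ht) (hdrift t ht)) (h.denom_pos ht).le)
    fun _ ht => (h.fst_mem ht).2

/- The equation `v̇ = w₃ κ / D - v` does not let `v` leave `[0, ∞)`. -/
theorem exists_tendsto_fst_of_forcing_nonneg (h : IsRegularSolution P T x z)
    (hforcing : ∀ t ∈ Ici T, 0 ≤ z t * P.forcing (x t)) : ∃ p, Tendsto x atTop (𝓝 p) := by
  by_cases hdrift : ∃ s ∈ Ici T, 0 ≤ P.drift (x s) (z s)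
  · obtain ⟨s, hs, hs0⟩ := hdrift
    have hmono := h.mono hs
    refine hmono.exists_tendsto_fst_of_drift_nonneg
      (nonneg_of_neg_mul_le_deriv (M := 1) (fun t ht => hmono.hasDerivWithinAt_drift ht) ?_ hs0)
    intro t ht
    have := div_nonneg (hforcing t (Ici_subset_Ici.2 hs ht)) (hmono.denom_pos ht).le
    linarith
  · push Not at hdrift
    refine exists_tendsto_of_const_sub 1
      (h.reflect.exists_tendsto_fst_of_drift_nonneg fun t ht => ?_)
    rw [P.reflect_drift]
    exact neg_nonneg.2 (hdrift t ht).le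

theorem exists_tendsto_fst_of_le_abs (h : IsRegularSolution P T x z)
    (hℓ : P.ℓ₃ ≤ |P.ℓ₂ - P.ℓ₁|) : ∃ p, Tendsto x atTop (𝓝 p) := by
  rcases le_abs.1 hℓ with hm | hm
  · exact h.exists_tendsto_fst_of_forcing_nonneg fun t ht =>
      mul_nonneg (h.snd_mem ht).1 (Params.forcing_nonneg hm (h.fst_mem ht))
  · rw [neg_sub] at hm
    have hr := h.reflect
    exact exists_tendsto_of_const_sub 1 <| hr.exists_tendsto_fst_of_forcing_nonneg fun t ht =>
      mul_nonneg (hr.snd_mem ht).1 (Params.forcing_nonneg (P := P.reflect) hm (hr.fst_mem ht))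

theorem snd_eq_zero_or_pos (h : IsRegularSolution P T x z) :
    (∀ t ∈ Ici T, z t = 0) ∨ ∃ s ∈ Ici T, ∀ t ∈ Ici s, 0 < z t := by
  refine eq_zero_or_pos_of_neg_mul_le_deriv (M := 1) h.hasDeriv_snd (fun t ht => ?_)
    fun t ht => (h.snd_mem ht).1
  rw [le_div_iff₀ (h.denom_pos ht)]
  linarith [mul_le_mul_of_nonneg_left (P.neg_denom_le_growth (z := z t) (h.fst_mem ht))
    (h.snd_mem ht).1]

theorem fst_eq_zero_or_pos (h : IsRegularSolution P T x z) :
    (∀ t ∈ Ici T, x t = 0) ∨ ∃ s ∈ Ici T, ∀ t ∈ Ici s, 0 < x t := by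
  obtain ⟨d, hd, hD⟩ := h.exists_le_denom
  refine eq_zero_or_pos_of_neg_mul_le_deriv (M := (P.ℓ₃ + |P.ℓ₂ - P.ℓ₁|) / d) h.hasDeriv_fst
    (fun t ht => ?_) fun t ht => (h.fst_mem ht).1
  have hx := h.fst_mem ht
  have hrate : |(1 - x t) * P.drift (x t) (z t) / P.denom (x t) (z t)|
      ≤ (P.ℓ₃ + |P.ℓ₂ - P.ℓ₁|) / d := by
    rw [abs_div, abs_mul, abs_of_pos (h.denom_pos ht), abs_of_nonneg (sub_nonneg.2 hx.2)]
    have hdrift := Params.abs_drift_le (P := P) hx (h.snd_mem ht)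
    exact div_le_div₀ ((abs_nonneg _).trans hdrift)
      ((mul_le_of_le_one_left (abs_nonneg _) (sub_le_self _ hx.1)).trans hdrift) hd (hD t ht)
  calc -((P.ℓ₃ + |P.ℓ₂ - P.ℓ₁|) / d) * x t
      ≤ (1 - x t) * P.drift (x t) (z t) / P.denom (x t) (z t) * x t :=
        mul_le_mul_of_nonneg_right (abs_le.1 hrate).1 hx.1
    _ = x t * (1 - x t) * P.drift (x t) (z t) / P.denom (x t) (z t) := by ring

theorem exists_tendsto_fst_or_mem_Ioo (h : IsRegularSolution P T x z) :
    (∃ p, Tendsto x atTop (𝓝 p)) ∨ ∃ s ∈ Ici T, ∀ t ∈ Ici s, x t ∈ Ioo 0 1 := by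
  rcases h.fst_eq_zero_or_pos with hzero | ⟨s, hs, hpos⟩
  · exact .inl ⟨0, tendsto_const_nhds.congr' ((eventually_ge_atTop T).mono fun t ht =>
      (hzero t ht).symm)⟩
  rcases h.reflect.fst_eq_zero_or_pos with hone | ⟨s', _, hpos'⟩
  · exact .inl ⟨1, tendsto_const_nhds.congr' ((eventually_ge_atTop T).mono fun t ht =>
      sub_eq_zero.1 (hone t ht))⟩
  · exact .inr ⟨max s s', le_trans (mem_Ici.1 hs) (le_max_left s s'), fun t ht =>
      ⟨hpos t (Ici_subset_Ici.2 (le_max_left s s') ht),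
        sub_pos.1 (hpos' t (Ici_subset_Ici.2 (le_max_right s s') ht))⟩⟩

end IsRegularSolution

/-- The Lyapunov function based at `(p, q)`. The coefficients of the two logarithms of `w₁` are
chosen such that its `w₁`-derivative is
`(ℓ₃ (ℓ₁ + (ℓ₂ - ℓ₁) w₁) + damping) (w₁ - p) / (w₁ (1 - w₁))`. -/
noncomputable def lyapunov (P : Params) (p q x z : ℝ) : ℝ :=
  (P.ℓ₂ - P.ℓ₁) ^ 2 * (z - q * Real.log z) - P.ℓ₃ * (P.ℓ₂ - P.ℓ₁) * x
    - (P.ℓ₃ * P.ℓ₁ + P.damping) * p * Real.log x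
    - (P.ℓ₃ * P.ℓ₂ + P.damping) * (1 - p) * Real.log (1 - x)

/-- The numerator of the rate at which `lyapunov` decreases along solutions. -/
def dissipation (P : Params) (p q x z : ℝ) : ℝ :=
  P.side x * P.drift x z ^ 2 + P.damping * P.ℓ₃ * (x - p) ^ 2
    - (P.ℓ₂ - P.ℓ₁) ^ 2 * z * P.growth p q

namespace IsSaturatedEquilibrium

variable {p q : ℝ}

theorem le_lyapunov (h : IsSaturatedEquilibrium P p q) (hc : 0 < P.damping) {u v : ℝ}
    (hu : u ∈ Icc 0 1) (hv : v ∈ Icc 0 1) :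
    -(P.ℓ₃ * |P.ℓ₂ - P.ℓ₁|) ≤ lyapunov P p q u v := by
  have := P.ℓ₁_pos
  have := P.ℓ₂_pos
  have hℓ₃ := P.ℓ₃_pos
  have := h.fst_mem.1
  have : 0 < 1 - p := sub_pos.2 h.fst_mem.2
  have hlog_u : Real.log u ≤ 0 := Real.log_nonpos hu.1 hu.2
  have hlog_u' : Real.log (1 - u) ≤ 0 :=
    Real.log_nonpos (sub_nonneg.2 hu.2) (sub_le_self _ hu.1)
  have hlog_v : Real.log v ≤ 0 := Real.log_nonpos hv.1 hv.2
  have hterm_v : 0 ≤ (P.ℓ₂ - P.ℓ₁) ^ 2 * (v - q * Real.log v) := mul_nonneg (sq_nonneg _)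
    (by linarith [hv.1, mul_nonpos_of_nonneg_of_nonpos h.snd_nonneg hlog_v])
  have hterm_u : (P.ℓ₃ * P.ℓ₁ + P.damping) * p * Real.log u ≤ 0 :=
    mul_nonpos_of_nonneg_of_nonpos (by positivity) hlog_u
  have hterm_u' : (P.ℓ₃ * P.ℓ₂ + P.damping) * (1 - p) * Real.log (1 - u) ≤ 0 :=
    mul_nonpos_of_nonneg_of_nonpos (by positivity) hlog_u'
  have hlinear : P.ℓ₃ * (P.ℓ₂ - P.ℓ₁) * u ≤ P.ℓ₃ * |P.ℓ₂ - P.ℓ₁| := calc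
    P.ℓ₃ * (P.ℓ₂ - P.ℓ₁) * u ≤ P.ℓ₃ * |P.ℓ₂ - P.ℓ₁| * u := by
      gcongr
      exacts [hu.1, le_abs_self _]
    _ ≤ P.ℓ₃ * |P.ℓ₂ - P.ℓ₁| := mul_le_of_le_one_right (by positivity) hu.2
  rw [lyapunov]
  linarith

theorem le_dissipation (h : IsSaturatedEquilibrium P p q) {u v : ℝ} (hu : u ∈ Icc 0 1)
    (hv : 0 ≤ v) : P.damping * P.ℓ₃ * (u - p) ^ 2 ≤ dissipation P p q u v := by
  have hside : 0 ≤ P.side u * P.drift u v ^ 2 :=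
    mul_nonneg (P.side_pos hu).le (sq_nonneg _)
  have hgrowth : (P.ℓ₂ - P.ℓ₁) ^ 2 * v * P.growth p q ≤ 0 :=
    mul_nonpos_of_nonneg_of_nonpos (mul_nonneg (sq_nonneg _) hv) h.growth_nonpos
  rw [dissipation]
  linarith

theorem neg_dissipation_eq (h : IsSaturatedEquilibrium P p q) (u v : ℝ) :
    -dissipation P p q u v =
      (P.ℓ₂ - P.ℓ₁) * (v - q) * ((P.ℓ₂ - P.ℓ₁) * P.growth u v)
        + (P.ℓ₃ * P.side u + P.damping) * (u - p) * P.drift u v := by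
  have hgrowth : (P.ℓ₂ - P.ℓ₁) * P.growth u v
      = (P.ℓ₂ - P.ℓ₁) * P.growth p q - P.damping * (u - p) - P.side u * P.drift u v := by
    have hp := P.forcing_eq_growth_add_drift p q
    rw [h.drift_eq_zero] at hp
    linarith [P.forcing_eq_growth_add_drift u v, P.forcing_eq_sub_damping p u]
  have hdrift : (P.ℓ₂ - P.ℓ₁) * (v - q) = P.drift u v + P.ℓ₃ * (u - p) := by
    have hpq := h.drift_eq_zero
    rw [Params.drift] at hpq ⊢
    linarith
  have hcomplementary : (P.ℓ₂ - P.ℓ₁) * (v - q) * ((P.ℓ₂ - P.ℓ₁) * P.growth p q)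
      = (P.ℓ₂ - P.ℓ₁) ^ 2 * v * P.growth p q := by
    linear_combination -(P.ℓ₂ - P.ℓ₁) ^ 2 * h.mul_growth_eq_zero
  rw [hgrowth, dissipation]
  linear_combination -hcomplementary
    + (P.damping * (u - p) + P.side u * P.drift u v) * hdrift

theorem hasDerivWithinAt_lyapunov (h : IsSaturatedEquilibrium P p q) (hsol : IsSolution P T x z)
    {t : ℝ} (ht : t ∈ Ici T) (hx : x t ∈ Ioo 0 1) (hz : 0 < z t) :
    HasDerivWithinAt (fun t => lyapunov P p q (x t) (z t))
      (-dissipation P p q (x t) (z t) / P.denom (x t) (z t)) (Ici T) t := by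
  have dx := hsol.hasDeriv_fst t ht
  have dz := hsol.hasDeriv_snd t ht
  have hx0 := hx.1.ne'
  have hx1 := (sub_pos.2 hx.2).ne'
  refine (((((dz.sub ((dz.log hz.ne').const_mul q)).const_mul ((P.ℓ₂ - P.ℓ₁) ^ 2)).sub
    (dx.const_mul (P.ℓ₃ * (P.ℓ₂ - P.ℓ₁)))).sub
    ((dx.log hx0).const_mul ((P.ℓ₃ * P.ℓ₁ + P.damping) * p))).sub
    (((dx.const_sub 1).log hx1).const_mul
      ((P.ℓ₃ * P.ℓ₂ + P.damping) * (1 - p)))).congr_deriv ?_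
  rw [h.neg_dissipation_eq, Params.side]
  field_simp
  ring

theorem exists_tendsto_fst (h : IsSaturatedEquilibrium P p q) (hc : 0 < P.damping)
    (hsol : IsRegularSolution P T x z) (hx : ∀ t ∈ Ici T, x t ∈ Ioo 0 1)
    (hz : ∀ t ∈ Ici T, 0 < z t) : ∃ p, Tendsto x atTop (𝓝 p) := by
  have hℓ₃ := P.ℓ₃_pos
  refine exists_tendsto_of_dissipation (r := fun t => (P.denom (x t) (z t))⁻¹) (p := p)
    (K := P.ℓ₃ + |P.ℓ₂ - P.ℓ₁|) (κ := P.damping * P.ℓ₃) (by positivity) (by positivity)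
    hsol.hasDeriv_fst
    (fun t ht => h.hasDerivWithinAt_lyapunov hsol.toIsSolution ht (hx t ht) (hz t ht)) hsol.fst_mem
    (fun t ht => h.le_lyapunov hc (hsol.fst_mem ht) (hsol.snd_mem ht))
    (fun t ht => inv_nonneg.2 (hsol.denom_pos ht).le) (fun t ht => ?_) fun t ht => ?_
  · have hD := hsol.denom_pos ht
    have hmul_le_one : x t * (1 - x t) ≤ 1 :=
      mul_le_one₀ (hx t ht).2.le (sub_pos.2 (hx t ht).2).le (sub_le_self _ (hx t ht).1.le)
    rw [div_eq_mul_inv]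
    gcongr
    calc x t * (1 - x t) * P.drift (x t) (z t)
        ≤ x t * (1 - x t) * |P.drift (x t) (z t)| :=
          mul_le_mul_of_nonneg_left (le_abs_self _) (hsol.mul_one_sub_nonneg ht)
      _ ≤ |P.drift (x t) (z t)| := mul_le_of_le_one_left (abs_nonneg _) hmul_le_one
      _ ≤ P.ℓ₃ + |P.ℓ₂ - P.ℓ₁| := P.abs_drift_le (hsol.fst_mem ht) (hsol.snd_mem ht)
  · rw [div_eq_mul_inv, neg_mul, neg_le_neg_iff]
    exact mul_le_mul_of_nonneg_right (h.le_dissipation (hsol.fst_mem ht) (hz t ht).le)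
      (inv_nonneg.2 (hsol.denom_pos ht).le)

end IsSaturatedEquilibrium

namespace IsRegularSolution

theorem exists_tendsto_fst (h : IsRegularSolution P T x z) : ∃ p, Tendsto x atTop (𝓝 p) := by
  rcases h.snd_eq_zero_or_pos with hz | ⟨s, hs, hz⟩
  · exact h.exists_tendsto_fst_of_forcing_nonneg fun t ht => by rw [hz t ht, zero_mul]
  rcases le_or_gt P.ℓ₃ |P.ℓ₂ - P.ℓ₁| with hℓ | hℓ
  · exact h.exists_tendsto_fst_of_le_abs hℓ
  rcases (h.mono hs).exists_tendsto_fst_or_mem_Ioo with hconv | ⟨s', hs', hx⟩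
  · exact hconv
  obtain ⟨p, q, hpq⟩ := exists_isSaturatedEquilibrium hℓ
  exact hpq.exists_tendsto_fst (P.damping_pos hℓ) ((h.mono hs).mono hs') hx
    fun t ht => hz t (Ici_subset_Ici.2 hs' ht)

theorem exists_tendsto_snd (h : IsRegularSolution P T x z) {p : ℝ} (hx : Tendsto x atTop (𝓝 p)) :
    ∃ q, Tendsto z atTop (𝓝 q) := by
  have hp : p ∈ Icc 0 1 :=
    isClosed_Icc.mem_of_tendsto hx ((eventually_ge_atTop T).mono h.fst_mem)
  have hL : 0 < P.side p := Params.side_pos hp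
  set r := P.growth p 0 / P.side p with hr
  have hgrowth : ∀ c, P.growth p c = P.side p * (r - c) := fun c => by
    rw [P.growth_eq_sub_side_mul 0 p c, sub_zero, hr, mul_sub, mul_div_cancel₀ _ hL.ne']
  have hlim : ∀ c, Tendsto (fun t => P.growth (x t) c) atTop (𝓝 (P.side p * (r - c))) := by
    intro c
    have hcont : Continuous fun u => P.growth u c := by
      unfold Params.growth Params.denom Params.side; fun_prop
    exact hgrowth c ▸ (hcont.tendsto p).comp hx
  refine exists_tendsto_of_deriv_sign_at_levels
    (((finite_singleton r).insert 0).countable.dense_compl ℝ) h.hasDeriv_snd h.snd_mem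
    fun c hc => ?_
  obtain ⟨hc0, hcr⟩ : c ≠ 0 ∧ c ≠ r := by simpa only [mem_compl_iff, mem_insert_iff,
    mem_singleton_iff, not_or] using hc
  have hpos : ∀ t ∈ Ici T, z t = c → 0 < z t := fun t ht htc =>
    (h.snd_mem ht).1.lt_of_ne' (htc ▸ hc0)
  rcases lt_or_gt_of_ne hcr with hcr | hcr
  · left
    filter_upwards [eventually_ge_atTop T,
      (hlim c).eventually_const_lt (mul_pos hL (sub_pos.2 hcr))] with t ht hgt htc
    exact div_pos (mul_pos (hpos t ht htc) (htc ▸ hgt)) (h.denom_pos ht)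
  · right
    filter_upwards [eventually_ge_atTop T,
      (hlim c).eventually_lt_const (mul_neg_of_pos_of_neg hL (sub_neg.2 hcr))] with t ht hgt htc
    exact div_neg_of_neg_of_pos (mul_neg_of_pos_of_neg (hpos t ht htc) (htc ▸ hgt)) (h.denom_pos ht)

end IsRegularSolution

theorem IsSolution.exists_tendsto (h : IsSolution P T x z) :
    (∃ p, Tendsto x atTop (𝓝 p)) ∧ ∃ q, Tendsto z atTop (𝓝 q) := by
  by_cases hcorner : ∃ s ∈ Ici T, 0 < z s + x s * (1 - x s)
  · obtain ⟨s, hs, hpos⟩ := hcorner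
    have hreg := (h.mono hs).isRegularSolution_of_pos hpos
    obtain ⟨p, hp⟩ := hreg.exists_tendsto_fst
    exact ⟨⟨p, hp⟩, hreg.exists_tendsto_snd hp⟩
  · push Not at hcorner
    exact h.exists_tendsto_of_add_mul_one_sub_nonpos hcorner

theorem isSolution_of_hasDerivWithinAt_field {y : ℝ → ℝ × ℝ}
    (hmem : MapsTo y (Ici T) (Icc 0 1 ×ˢ Icc 0 1))
    (hderiv : ∀ t ∈ Ici T, HasDerivWithinAt y (P.field (y t)) (Ici T) t) :
    IsSolution P T (fun t => (y t).1) (fun t => (y t).2) where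
  fst_mem _ ht := (hmem ht).1
  snd_mem _ ht := (hmem ht).2
  hasDeriv_fst t ht :=
    (ContinuousLinearMap.fst ℝ ℝ ℝ).hasFDerivAt.comp_hasDerivWithinAt t (hderiv t ht)
  hasDeriv_snd t ht :=
    (ContinuousLinearMap.snd ℝ ℝ ℝ).hasFDerivAt.comp_hasDerivWithinAt t (hderiv t ht)

end TwoNestAnts

open TwoNestAnts in
theorem statement14_general (P : Params) {T : ℝ} {y : ℝ → ℝ × ℝ}
    (hmem : ∀ t ∈ Set.Ici T, y t ∈ Set.Icc (0 : ℝ) 1 ×ˢ Set.Icc (0 : ℝ) 1)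
    (hderiv : ∀ t ∈ Set.Ici T, HasDerivWithinAt y (P.field (y t)) (Set.Ici T) t) :
    ∃ p : ℝ × ℝ, Tendsto y atTop (nhds p) :=
  let ⟨⟨_, hp⟩, ⟨_, hq⟩⟩ := (isSolution_of_hasDerivWithinAt_field hmem hderiv).exists_tendsto
  ⟨_, hp.prodMk_nhds hq⟩

/-- Every solution `y : [0,∞) → [0,1]²` of the ODE `ẏ = F(y)`, where `F = (F1, F3)` is
the vector field of the stochastic approximation associated with the two-nest ants
process on the `(ℓ1,ℓ2,ℓ3)`-triangle (with the convention `F = 0` where the common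
denominator `D` vanishes), converges as `t → ∞`. -/
theorem statement14 (α ℓ1 ℓ2 ℓ3 : ℝ) (hα : α ∈ Set.Ioo (0:ℝ) 1)
    (h1 : 1 ≤ ℓ1) (h2 : 1 ≤ ℓ2) (h3 : 1 ≤ ℓ3) (h12 : ℓ1 ≤ ℓ2)
    (F : ℝ × ℝ → ℝ × ℝ)
    (hF : ∀ w : ℝ × ℝ,
      F w = if w.2 * (ℓ1 + w.1 * (ℓ2 - ℓ1)) + ℓ3 * w.1 * (1 - w.1) = 0 then 0
        else
          (w.1 * (1 - w.1) * (ℓ3 * (α - w.1) + (ℓ2 - ℓ1) * w.2)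
              / (w.2 * (ℓ1 + w.1 * (ℓ2 - ℓ1)) + ℓ3 * w.1 * (1 - w.1)),
            w.2 * (ℓ2 * (1 - α) * w.1 + ℓ1 * α * (1 - w.1) - ℓ3 * w.1 * (1 - w.1)
                    - w.2 * (ℓ1 + w.1 * (ℓ2 - ℓ1)))
              / (w.2 * (ℓ1 + w.1 * (ℓ2 - ℓ1)) + ℓ3 * w.1 * (1 - w.1))))
    (y : ℝ → ℝ × ℝ)
    (hy_mem : ∀ t, 0 ≤ t → y t ∈ Set.Icc (0:ℝ) 1 ×ˢ Set.Icc (0:ℝ) 1)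
    (hy_deriv : ∀ t, 0 ≤ t → HasDerivWithinAt y (F (y t)) (Set.Ici 0) t) :
    ∃ p : ℝ × ℝ, Tendsto y atTop (nhds p) := by
  let P : TwoNestAnts.Params :=
    ⟨α, ℓ1, ℓ2, ℓ3, hα.1, hα.2, by linarith, by linarith, by linarith⟩
  obtain rfl : F = P.field := funext fun w => (hF w).trans (P.field_eq_ite w).symm
  exact statement14_general P hy_mem hy_deriv
end

section
/- Fix α ∈ (0,1) and positive reals ℓ1 ≤ ℓ2 and ℓ3 > 0. Then for all reals w1 ∈ (0,α) and w3 ∈ [0,1], (α·ℓ3·w1·(1−w1) + ℓ2·w1·w3)/(ℓ3·w1·(1−w1) + ℓ2·w1·w3 + ℓ1·(1−w1)·w3) > w1. -/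
/-!
With weights `A = ℓ3 * w1 * (1 - w1)`, `B = ℓ2 * w1 * w3` and `C = ℓ1 * (1 - w1) * w3`, the quotient
`(α * A + B) / (A + B + C)` is a weighted mean of `α`, with weight `A > 0`, and of `B / (B + C)`,
with weight `B + C` (which vanishes when `w3 = 0`). The first value exceeds `w1`; the second is at
least `w1` because the convex combination `ℓ2 * w1 + ℓ1 * (1 - w1)` is at most `ℓ2`.
-/

theorem lt_mul_add_div_add_of_lt_of_mul_le {K : Type*} [Semifield K] [LinearOrder K]
    [IsStrictOrderedRing K] {a s t u w : K} (hs : 0 < s) (ht : 0 ≤ t) (ha : w < a)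
    (hu : w * t ≤ u) : w < (a * s + u) / (s + t) := by
  rw [lt_div_iff₀ (add_pos_of_pos_of_nonneg hs ht)]
  calc w * (s + t) = w * s + w * t := mul_add w s t
    _ < a * s + u := add_lt_add_of_lt_of_le (mul_lt_mul_of_pos_right ha hs) hu

theorem mul_combo_mul_le {R : Type*} [CommRing R] [PartialOrder R] [IsOrderedRing R]
    {x y v w : R} (hxy : x ≤ y) (hv : 0 ≤ v) (hw0 : 0 ≤ w) (hw1 : w ≤ 1) :
    w * (y * w * v + x * (1 - w) * v) ≤ y * w * v := by
  have combo_le : y * w + x * (1 - w) ≤ y := by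
    calc y * w + x * (1 - w) ≤ y * w + y * (1 - w) := by gcongr
      _ = y := by ring
  calc w * (y * w * v + x * (1 - w) * v) = (y * w + x * (1 - w)) * (w * v) := by ring
    _ ≤ y * (w * v) := by gcongr
    _ = y * w * v := (mul_assoc y w v).symm

theorem statement15_general {K : Type*} [Field K] [LinearOrder K] [IsStrictOrderedRing K]
    {α ℓ1 ℓ2 ℓ3 w1 w3 : K} (h1 : 0 ≤ ℓ1) (h12 : ℓ1 ≤ ℓ2) (h3 : 0 < ℓ3)
    (hw1_pos : 0 < w1) (hw1_lt : w1 < 1) (hw1α : w1 < α) (hw3 : 0 ≤ w3) :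
    w1 < (α * ℓ3 * w1 * (1 - w1) + ℓ2 * w1 * w3)
        / (ℓ3 * w1 * (1 - w1) + ℓ2 * w1 * w3 + ℓ1 * (1 - w1) * w3) := by
  have h2 : 0 ≤ ℓ2 := h1.trans h12
  have hw2 : 0 < 1 - w1 := sub_pos.mpr hw1_lt
  have hA : 0 < ℓ3 * w1 * (1 - w1) := mul_pos (mul_pos h3 hw1_pos) hw2
  have hBC : 0 ≤ ℓ2 * w1 * w3 + ℓ1 * (1 - w1) * w3 := by positivity
  simpa only [mul_assoc, add_assoc] using
    lt_mul_add_div_add_of_lt_of_mul_le hA hBC hw1α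
      (mul_combo_mul_le h12 hw3 hw1_pos.le hw1_lt.le)

/-- Strict domination of the identity by `p1(w1, 1-w1, w3)` on `w1 ∈ (0, α)`: the key
step showing that the normalized reinforcement count of branch 1 of the
`(ℓ1,ℓ2,ℓ3)`-triangle has liminf at least `α`. -/
theorem statement15 (α ℓ1 ℓ2 ℓ3 : ℝ) (hα : α ∈ Set.Ioo (0:ℝ) 1)
    (h1 : 0 < ℓ1) (h2 : 0 < ℓ2) (h12 : ℓ1 ≤ ℓ2) (h3 : 0 < ℓ3)
    (w1 w3 : ℝ) (hw1 : w1 ∈ Set.Ioo 0 α) (hw3 : w3 ∈ Set.Icc (0:ℝ) 1) :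
    w1 < (α * ℓ3 * w1 * (1 - w1) + ℓ2 * w1 * w3)
        / (ℓ3 * w1 * (1 - w1) + ℓ2 * w1 * w3 + ℓ1 * (1 - w1) * w3) := by
  exact statement15_general h1.le h12 h3 hw1.1 (hw1.2.trans hα.2) hw1.2 hw3.1
end
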